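/- Let G = (V,E) be a graph, S = (S(v))_{v∈V} a label assignment, u ∈ V, and let S′ be the label assignment obtained from S by replacing S(u) by some other subset S′(u) ⊆ ℕ. Let i be a nonnegative integer and let w be a vertex whose colour at time i with respect to S differs from its colour at time i with respect to S′. Then there exists a path u = x₀, x₁, …, x_m = w in G and labels l₀ < l₁ < ⋯ (all at most i), such that for each j < m the vertex x_j gained or lost the relevant label l_j when S was replaced by S′ (i.e., l_j is relevant for x_j with respect to exactly one of S and S′), and these relevant labels are strictly increasing along the path from u towards w. -/

import Mathlib

open MeasureTheory ProbabilityTheory Filter Set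

namespace InducedForest

variable {V : Type*}

/-- Label `i` is *relevant* for vertex `v` (w.r.t. the label assignment `S`):
either `i = 0` and `0 ∈ S v`, or `i ∈ S v`, no `j < i` is relevant for `v`, and
there is a unique neighbour of `v` having a relevant label strictly smaller than `i`. -/
def Relevant (G : SimpleGraph V) (S : V → Set ℕ) (i : ℕ) : V → Prop :=
  Nat.strongRecOn i (fun i ih v =>
    (i = 0 ∧ 0 ∈ S v) ∨
    (i ∈ S v ∧ (∀ j, (h : j < i) → ¬ ih j h v) ∧
      (∃! u, G.Adj v u ∧ ∃ j, ∃ h : j < i, ih j h u)))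

/-- `v` has some relevant label `≤ l`, i.e. `v ∈ R_{≤ l}`. -/
def RelevantLe (G : SimpleGraph V) (S : V → Set ℕ) (l : ℕ) (v : V) : Prop :=
  ∃ i ≤ l, Relevant G S i v

inductive Colour | white | blue | orange | purple
deriving DecidableEq

open Classical in
/-- The colour of `u` at time `l`. -/
noncomputable def colourAt (G : SimpleGraph V) (S : V → Set ℕ) (l : ℕ) (u : V) : Colour :=
  if RelevantLe G S l u then Colour.purple
  else if ∀ v, G.Adj u v → ¬ RelevantLe G S l v then Colour.white
  else if ∃! v, G.Adj u v ∧ RelevantLe G S l v then Colour.blue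
  else Colour.orange

/-- The set `W_l` of white vertices at time `l`. -/
def White (G : SimpleGraph V) (S : V → Set ℕ) (l : ℕ) : Set V :=
  {u | ¬ RelevantLe G S l u ∧ ∀ v, G.Adj u v → ¬ RelevantLe G S l v}

/-- The set `B_l` of blue vertices at time `l`. -/
def Blue (G : SimpleGraph V) (S : V → Set ℕ) (l : ℕ) : Set V :=
  {u | ¬ RelevantLe G S l u ∧ ∃! v, G.Adj u v ∧ RelevantLe G S l v}

/-- There is a path from `u` to `v` whose changed labels are increasing and all `< n`. -/
def IncPath (G : SimpleGraph V) (S S' : V → Set ℕ) (u : V) (n : ℕ) (v : V) : Prop :=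
  ∃ (m : ℕ) (x : ℕ → V) (l : ℕ → ℕ),
      x 0 = u ∧ x m = v ∧
      (∀ j, j < m → G.Adj (x j) (x (j + 1))) ∧
      (∀ j j', j ≤ m → j' ≤ m → x j = x j' → j = j') ∧
      (∀ j, j < m → l j < n ∧
        ¬ (Relevant G S (l j) (x j) ↔ Relevant G S' (l j) (x j))) ∧
      (∀ j, j + 1 < m → l j < l (j + 1))

theorem relevant_iff (G : SimpleGraph V) (S : V → Set ℕ) (i : ℕ) (v : V) :
    Relevant G S i v ↔ (i = 0 ∧ 0 ∈ S v) ∨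
    (i ∈ S v ∧ (∀ j, j < i → ¬ Relevant G S j v) ∧
      (∃! u, G.Adj v u ∧ ∃ j, j < i ∧ Relevant G S j u)) := by
  have h : Relevant G S i = fun v => (i = 0 ∧ 0 ∈ S v) ∨
    (i ∈ S v ∧ (∀ j, (h : j < i) → ¬ Relevant G S j v) ∧
      (∃! u, G.Adj v u ∧ ∃ j, ∃ h : j < i, Relevant G S j u)) := by
    unfold Relevant
    exact WellFounded.fix_eq _ _ _
  rw [h]
  simp only [exists_prop]

theorem IncPath.refl (G : SimpleGraph V) (S S' : V → Set ℕ) (u : V) (n : ℕ) :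
    IncPath G S S' u n u :=
  ⟨0, fun _ => u, fun _ => 0, rfl, rfl, by simp, by intros; omega, by simp, by simp⟩

theorem IncPath.mono {G : SimpleGraph V} {S S' : V → Set ℕ} {u v : V} {n n' : ℕ}
    (h : IncPath G S S' u n v) (hn : n ≤ n') : IncPath G S S' u n' v := by
  obtain ⟨m, x, l, h0, h1, h2, h3, h4, h5⟩ := h
  exact ⟨m, x, l, h0, h1, h2, h3, fun j hj => ⟨(h4 j hj).1.trans_le hn, (h4 j hj).2⟩, h5⟩

theorem IncPath.append {G : SimpleGraph V} {S S' : V → Set ℕ} {u y v : V} {n k : ℕ}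
    (h : IncPath G S S' u k y) (hk : k < n)
    (hc : ¬ (Relevant G S k y ↔ Relevant G S' k y)) (hadj : G.Adj y v) :
    IncPath G S S' u n v := by
  obtain ⟨m, x, l, h0, h1, h2, h3, h4, h5⟩ := h
  by_cases hv : ∃ t ≤ m, x t = v
  · obtain ⟨t, ht, hv⟩ := hv
    exact ⟨t, x, l, h0, hv, fun j hj => h2 j (by omega),
      fun j j' hj hj' => h3 j j' (by omega) (by omega),
      fun j hj => ⟨(h4 j (by omega)).1.trans hk, (h4 j (by omega)).2⟩,
      fun j hj => h5 j (by omega)⟩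
  · push Not at hv
    refine ⟨m + 1, fun t => if t ≤ m then x t else v, fun t => if t < m then l t else k,
      by simpa using h0, by simp, ?_, ?_, ?_, ?_⟩
    · intro j hj
      rcases Nat.lt_or_ge j m with hjm | hjm
      · simpa [hjm.le, hjm] using h2 j hjm
      · obtain rfl : j = m := by omega
        simpa [h1] using hadj
    · intro j j' hj hj' he
      by_cases a : j ≤ m <;> by_cases b : j' ≤ m <;> simp only [a, b, if_true, if_false] at he
      · exact h3 j j' a b he
      · exact absurd he (hv j a)
      · exact absurd he.symm (hv j' b)
      · omega
    · intro j hj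
      rcases Nat.lt_or_ge j m with hjm | hjm
      · simpa [hjm.le, hjm] using ⟨(h4 j hjm).1.trans hk, (h4 j hjm).2⟩
      · obtain rfl : j = m := by omega
        simpa only [le_refl, lt_irrefl, if_true, if_false, h1] using ⟨hk, hc⟩
    · intro j hj
      have hjm : j < m := by omega
      simp only [hjm, if_true]
      split_ifs with a
      · exact h5 j a
      · exact (h4 j hjm).1

theorem incPath_of_change (G : SimpleGraph V) (S S' : V → Set ℕ) (u : V)
    (hS' : ∀ v, v ≠ u → S' v = S v) (n : ℕ) : ∀ v,
    ¬ (Relevant G S n v ↔ Relevant G S' n v) → IncPath G S S' u n v := by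
  induction n using Nat.strong_induction_on with
  | _ n ih =>
    intro v hc
    by_cases hvu : v = u
    · subst hvu; exact IncPath.refl ..
    by_contra hno
    apply hc
    have hself : ∀ j < n, (Relevant G S j v ↔ Relevant G S' j v) := by
      intro j hj
      by_contra h
      exact hno ((ih j hj v h).mono hj.le)
    have hnb : ∀ y, G.Adj v y → ∀ j < n, (Relevant G S j y ↔ Relevant G S' j y) := by
      intro y hy j hj
      by_contra h
      exact hno ((ih j hj y h).append hj h hy.symm)
    have e1 : (∀ j, j < n → ¬ Relevant G S j v) ↔ (∀ j, j < n → ¬ Relevant G S' j v) :=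
      forall_congr' fun j => forall_congr' fun hj => not_congr (hself j hj)
    have e2 : ∀ y, (G.Adj v y ∧ ∃ j, j < n ∧ Relevant G S j y) ↔
        (G.Adj v y ∧ ∃ j, j < n ∧ Relevant G S' j y) := fun y =>
      and_congr_right fun hy => exists_congr fun j => and_congr_right fun hj => hnb y hy j hj
    rw [relevant_iff G S, relevant_iff G S', hS' v hvu, e1]
    simp only [e2]

/-- If changing the label set of `u` (only) changes the colour of `w` at
time `i`, then there is a path from `u` to `w` along which each vertex except possibly `w`
gained or lost a relevant label `≤ i`, these labels being strictly increasing along the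
path from `u` towards `w`. -/
theorem exists_path_of_colour_change
    (G : SimpleGraph V) (S S' : V → Set ℕ) (u : V)
    (hS' : ∀ v, v ≠ u → S' v = S v)
    (i : ℕ) (w : V)
    (hcol : colourAt G S i w ≠ colourAt G S' i w) :
    ∃ (m : ℕ) (x : ℕ → V) (l : ℕ → ℕ),
      x 0 = u ∧ x m = w ∧
      (∀ j, j < m → G.Adj (x j) (x (j + 1))) ∧
      (∀ j j', j ≤ m → j' ≤ m → x j = x j' → j = j') ∧
      (∀ j, j < m → l j ≤ i ∧
        ¬ (Relevant G S (l j) (x j) ↔ Relevant G S' (l j) (x j))) ∧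
      (∀ j, j + 1 < m → l j < l (j + 1)) := by
  suffices h : IncPath G S S' u (i + 1) w by
    simpa only [IncPath, Nat.lt_succ_iff] using h
  by_contra hno
  apply hcol
  have hself : RelevantLe G S i w ↔ RelevantLe G S' i w := by
    refine exists_congr fun j => and_congr_right fun hj => ?_
    by_contra h
    exact hno ((incPath_of_change G S S' u hS' j w h).mono (by omega))
  have hnb : ∀ y, G.Adj w y → (RelevantLe G S i y ↔ RelevantLe G S' i y) := by
    intro y hy
    refine exists_congr fun j => and_congr_right fun hj => ?_
    by_contra h
    exact hno ((incPath_of_change G S S' u hS' j y h).append (by omega) h hy.symm)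
  have e1 : (∀ v, G.Adj w v → ¬ RelevantLe G S i v) ↔
      (∀ v, G.Adj w v → ¬ RelevantLe G S' i v) :=
    forall_congr' fun v => forall_congr' fun hv => not_congr (hnb v hv)
  have e2 : (∃! v, G.Adj w v ∧ RelevantLe G S i v) ↔
      (∃! v, G.Adj w v ∧ RelevantLe G S' i v) :=
    existsUnique_congr fun v => and_congr_right fun hv => hnb v hv
  unfold colourAt
  classical
  exact if_congr hself rfl (if_congr e1 rfl (if_congr e2 rfl rfl))

end InducedForest
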